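/- arXiv:2512.16346 — 5 statements merged into one kernel-verified Lean document; each statement's English description precedes it below -/
import Mathlib

section
/- The characteristic polynomial of the primitive-variable MHD matrix D^x factors through the magnetosonic quadratics: for all real γ > 1, ρ > 0, p > 0 and u, v, w, b1, b2, b3 ∈ ℝ, one has, as an identity of polynomials in X over ℝ, det(X·I₈ − D^x) = (X − u)² · ((X − u)² − b1²/ρ) · ((X − u)⁴ − (c² + |b|²/ρ)(X − u)² + c²b1²/ρ), where c² = γp/ρ and |b|² = b1² + b2² + b3². Hence the eigenvalues of D^x are u, u (double), u ± c_a, u ± c_f, and u ± c_s. -/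
open Polynomial

/-! Apart from advection at speed `u`, velocity perturbations are driven only by the thermodynamic
and magnetic variables `(ρ, p, b₁, b₂, b₃)`, and these only by the velocity. Hence, after grouping
the variables, `Dˣ = u • 1 + [0, A; B, 0]` with `A` of size `3 × 5`, and eliminating one group of
variables shows that the characteristic polynomial of `Dˣ` at `X` is `(X - u)²` times that of
`A * B` at `(X - u)²`. This `3 × 3` product is an arrowhead matrix with a repeated diagonal entry
`b₁² / ρ`, which gives the Alfvén factor; the remaining quadratic is the magnetosonic one. -/

open Matrix

section Charpoly

variable {R m n : Type*} [CommRing R] [Fintype m] [Fintype n] [DecidableEq m] [DecidableEq n]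

theorem charpoly_add_scalar (M : Matrix n n R) (u : R) :
    (M + scalar n u).charpoly = M.charpoly.comp (X - C u) := by
  simpa only [map_neg, sub_neg_eq_add, ← sub_eq_add_neg] using charpoly_sub_scalar M (-u)

theorem expand_charpoly (k : ℕ) (M : Matrix n n R) :
    expand R k M.charpoly = (scalar n (X ^ k) - M.map C).det := by
  rw [Matrix.charpoly, AlgHom.map_det]
  congr 1
  ext1 i j
  by_cases h : i = j <;> simp [h]

theorem X_pow_mul_charpoly_fromBlocks_zero_diag (A : Matrix m n R) (B : Matrix n m R) :
    X ^ Fintype.card m * (fromBlocks 0 A B 0).charpoly =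
      X ^ Fintype.card n * expand R 2 (A * B).charpoly := by
  have block_elimination :
      (fromBlocks 0 A B 0).charmatrix * fromBlocks (scalar m X) 0 (B.map C) 1 =
        fromBlocks (scalar m (X ^ 2) - (A * B).map C) (-A.map C) 0 (scalar n X) := by
    simp [charmatrix_fromBlocks, fromBlocks_multiply, sub_eq_add_neg, sq, -scalar_apply,
      scalar_comm, Commute.all]
  have det_elimination := congrArg det block_elimination
  rw [det_mul, det_fromBlocks_zero₁₂, det_fromBlocks_zero₂₁, ← expand_charpoly] at det_elimination
  simpa [Matrix.charpoly, mul_comm] using det_elimination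

theorem charpoly_fromBlocks_zero_diag_of_le (A : Matrix m n R) (B : Matrix n m R)
    (hle : Fintype.card m ≤ Fintype.card n) :
    (fromBlocks 0 A B 0).charpoly =
      X ^ (Fintype.card n - Fintype.card m) * expand R 2 (A * B).charpoly := by
  rw [← (isRegular_X_pow (Fintype.card m)).left.eq_iff, ← mul_assoc, ← pow_add,
    Nat.add_sub_cancel' hle, X_pow_mul_charpoly_fromBlocks_zero_diag]

theorem charpoly_arrowhead_fin_three (a d x y x' y' : R) :
    (!![a, x, y;
        x', d, 0;
        y', 0, d]).charpoly =
      (X - C d) * ((X - C a) * (X - C d) - C (x * x' + y * y')) := by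
  have charmatrix_eq : (!![a, x, y; x', d, 0; y', 0, d]).charmatrix =
      !![X - C a, -C x, -C y; -C x', X - C d, 0; -C y', 0, X - C d] := by
    ext1 i j
    fin_cases i <;> fin_cases j <;> simp
  rw [Matrix.charpoly, charmatrix_eq, det_fin_three]
  simp only [of_apply, cons_val, map_add, map_mul]
  ring

end Charpoly

section MHD

variable {R : Type*} [CommRing R]

/-- The primitive-variable MHD matrix `Dˣ`, with variables ordered as
`(ρ, u, v, w, p, b₁, b₂, b₃)`, over an arbitrary commutative ring. The density is a unit, so that
dividing by it involves no junk values. -/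
def mhdPrimitiveMatrix (ρ : Rˣ) (γ p u b1 b2 b3 : R) : Matrix (Fin 8) (Fin 8) R :=
  !![u, ρ, 0, 0, 0, 0, 0, 0;
     0, u, 0, 0, 1 /ₚ ρ, 0, b2 /ₚ ρ, b3 /ₚ ρ;
     0, 0, u, 0, 0, 0, -b1 /ₚ ρ, 0;
     0, 0, 0, u, 0, 0, 0, -b1 /ₚ ρ;
     0, γ * p, 0, 0, u, 0, 0, 0;
     0, 0, 0, 0, 0, u, 0, 0;
     0, b2, -b1, 0, 0, 0, u, 0;
     0, b3, 0, -b1, 0, 0, 0, u]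

/-- The coefficients of the gradients of `(ρ, p, b₁, b₂, b₃)` in the equations for the velocity
`(u, v, w)`. -/
def mhdForceBlock (ρ : Rˣ) (b1 b2 b3 : R) : Matrix (Fin 3) (Fin 5) R :=
  !![0, 1 /ₚ ρ, 0, b2 /ₚ ρ, b3 /ₚ ρ;
     0, 0, 0, -b1 /ₚ ρ, 0;
     0, 0, 0, 0, -b1 /ₚ ρ]

/-- The coefficients of the velocity gradients in the equations for `(ρ, p, b₁, b₂, b₃)`. -/
def mhdTransportBlock (ρ : Rˣ) (γ p b1 b2 b3 : R) : Matrix (Fin 5) (Fin 3) R :=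
  !![(ρ : R), 0, 0;
     γ * p, 0, 0;
     0, 0, 0;
     b2, -b1, 0;
     b3, 0, -b1]

/-- The matrix `Dˣ - u • 1`, with the variables regrouped as `(u, v, w)` and `(ρ, p, b₁, b₂, b₃)`;
neither group acts on itself. -/
def mhdCoupling (ρ : Rˣ) (γ p b1 b2 b3 : R) : Matrix (Fin 3 ⊕ Fin 5) (Fin 3 ⊕ Fin 5) R :=
  fromBlocks 0 (mhdForceBlock ρ b1 b2 b3) (mhdTransportBlock ρ γ p b1 b2 b3) 0

/-- The permutation of the variables `(ρ, u, v, w, p, b₁, b₂, b₃)` that lists the velocity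
`(u, v, w)` first and the remaining five variables after it. -/
def mhdVariableEquiv : Fin 8 ≃ Fin 3 ⊕ Fin 5 where
  toFun := ![.inr 0, .inl 0, .inl 1, .inl 2, .inr 1, .inr 2, .inr 3, .inr 4]
  invFun := Sum.elim ![1, 2, 3] ![0, 4, 5, 6, 7]
  left_inv := by decide
  right_inv := by decide

theorem mhdForceBlock_mul_mhdTransportBlock (ρ : Rˣ) (γ p b1 b2 b3 : R) :
    mhdForceBlock ρ b1 b2 b3 * mhdTransportBlock ρ γ p b1 b2 b3 =
      !![(γ * p + b2 ^ 2 + b3 ^ 2) /ₚ ρ, -(b1 * b2) /ₚ ρ, -(b1 * b3) /ₚ ρ;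
         -(b1 * b2) /ₚ ρ, b1 ^ 2 /ₚ ρ, 0;
         -(b1 * b3) /ₚ ρ, 0, b1 ^ 2 /ₚ ρ] := by
  ext i j
  fin_cases i <;> fin_cases j <;>
    simp only [mhdForceBlock, mhdTransportBlock, Matrix.mul_apply, Fin.sum_univ_five, divp,
      of_apply, cons_val, Fin.zero_eta, Fin.mk_one, Fin.reduceFinMk] <;>
    ring

theorem charpoly_mhdForceBlock_mul_mhdTransportBlock (ρ : Rˣ) (γ p b1 b2 b3 : R) :
    (mhdForceBlock ρ b1 b2 b3 * mhdTransportBlock ρ γ p b1 b2 b3).charpoly =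
      (X - C (b1 ^ 2 /ₚ ρ)) *
        (X ^ 2 - C (γ * p /ₚ ρ + (b1 ^ 2 + b2 ^ 2 + b3 ^ 2) /ₚ ρ) * X +
          C (γ * p /ₚ ρ * b1 ^ 2 /ₚ ρ)) := by
  rw [mhdForceBlock_mul_mhdTransportBlock, charpoly_arrowhead_fin_three]
  simp only [divp, map_add, map_mul, map_neg, map_pow]
  ring

theorem charpoly_mhdCoupling (ρ : Rˣ) (γ p b1 b2 b3 : R) :
    (mhdCoupling ρ γ p b1 b2 b3).charpoly =
      X ^ 2 * (X ^ 2 - C (b1 ^ 2 /ₚ ρ)) *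
        (X ^ 4 - C (γ * p /ₚ ρ + (b1 ^ 2 + b2 ^ 2 + b3 ^ 2) /ₚ ρ) * X ^ 2 +
          C (γ * p /ₚ ρ * b1 ^ 2 /ₚ ρ)) := by
  rw [mhdCoupling, charpoly_fromBlocks_zero_diag_of_le _ _ (by simp),
    charpoly_mhdForceBlock_mul_mhdTransportBlock]
  simp only [Fintype.card_fin, Nat.reduceSub, map_mul, map_sub, map_add, map_pow, expand_X,
    expand_C]
  ring

theorem mhdPrimitiveMatrix_eq_reindex (ρ : Rˣ) (γ p u b1 b2 b3 : R) :
    mhdPrimitiveMatrix ρ γ p u b1 b2 b3 =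
      reindex mhdVariableEquiv.symm mhdVariableEquiv.symm
        (mhdCoupling ρ γ p b1 b2 b3 + scalar _ u) := by
  ext i j
  fin_cases i <;> fin_cases j <;>
    simp [mhdPrimitiveMatrix, mhdCoupling, mhdVariableEquiv, mhdForceBlock, mhdTransportBlock]

theorem mhd_primitive_charpoly_general (ρ : Rˣ) (γ p u b1 b2 b3 : R) :
    (mhdPrimitiveMatrix ρ γ p u b1 b2 b3).charpoly =
      (X - C u) ^ 2 * ((X - C u) ^ 2 - C (b1 ^ 2 /ₚ ρ)) *
        ((X - C u) ^ 4 - C (γ * p /ₚ ρ + (b1 ^ 2 + b2 ^ 2 + b3 ^ 2) /ₚ ρ) * (X - C u) ^ 2 +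
          C (γ * p /ₚ ρ * b1 ^ 2 /ₚ ρ)) := by
  rw [mhdPrimitiveMatrix_eq_reindex, charpoly_reindex, charpoly_add_scalar, charpoly_mhdCoupling]
  simp only [mul_comp, sub_comp, add_comp, pow_comp, X_comp, C_comp]

end MHD

/-- The characteristic polynomial of the primitive-variable MHD matrix `D^x` factors
through the magnetosonic quadratics:
`det(X·I₈ − D^x) = (X − u)²((X − u)² − b1²/ρ)((X − u)⁴ − (c² + |b|²/ρ)(X − u)² + c²b1²/ρ)`,
where `c² = γp/ρ` and `|b|² = b1² + b2² + b3²`. Hence the eigenvalues of `D^x` are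
`u` (double), `u ± c_a`, `u ± c_f`, and `u ± c_s`. -/
theorem mhd_primitive_charpoly
    (γ ρ p u v w b1 b2 b3 : ℝ) (hγ : 1 < γ) (hρ : 0 < ρ) (hp : 0 < p)
    (Dx : Matrix (Fin 8) (Fin 8) ℝ)
    (hDx : Dx = !![u, ρ, 0, 0, 0, 0, 0, 0;
                   0, u, 0, 0, 1/ρ, 0, b2/ρ, b3/ρ;
                   0, 0, u, 0, 0, 0, -b1/ρ, 0;
                   0, 0, 0, u, 0, 0, 0, -b1/ρ;
                   0, γ*p, 0, 0, u, 0, 0, 0;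
                   0, 0, 0, 0, 0, u, 0, 0;
                   0, b2, -b1, 0, 0, 0, u, 0;
                   0, b3, 0, -b1, 0, 0, 0, u]) :
    Dx.charpoly =
      (X - C u) ^ 2 * ((X - C u) ^ 2 - C (b1 ^ 2 / ρ)) *
        ((X - C u) ^ 4 - C (γ * p / ρ + (b1 ^ 2 + b2 ^ 2 + b3 ^ 2) / ρ) * (X - C u) ^ 2 +
          C (γ * p / ρ * b1 ^ 2 / ρ)) := by
  subst hDx
  simpa only [mhdPrimitiveMatrix, divp_mk0, Units.val_mk0] using
    mhd_primitive_charpoly_general (Units.mk0 ρ hρ.ne') γ p u b1 b2 b3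
end

section
/- The fast magnetosonic eigenvectors of the primitive-variable MHD matrix: under the stated hypotheses, the vector r₁ = (α̂_f ρ, −α̂_f c_f, α̂_s c_s β1 β2, α̂_s c_s β1 β3, α̂_f ρ c², 0, α̂_s √ρ c β2, α̂_s √ρ c β3)ᵀ satisfies D^x r₁ = (u − c_f) r₁, and the vector r₈ = (α̂_f ρ, α̂_f c_f, −α̂_s c_s β1 β2, −α̂_s c_s β1 β3, α̂_f ρ c², 0, α̂_s √ρ c β2, α̂_s √ρ c β3)ᵀ satisfies D^x r₈ = (u + c_f) r₈. -/
/-!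
All rows of the eigenvalue equation reduce to three scalar relations between the wave speed, its
companion speed and the weights. They hold because the squares of the fast and slow speeds are the
roots of the magnetosonic quadratic `z² - (c² + a² + d²) z + c² a²`, where `a` and `d` are the
normal and transverse Alfvén speeds: its constant term gives the product of the speeds, and its
value `-c² d²` at `z = c²` gives the product of the two gaps `c_f² - c²` and `c² - c_s²`. The
left-going wave is obtained from the right-going one by changing the sign of both speeds.
-/

open Real

theorem mul_abs_eq_of_mul_eq_abs {R : Type*} [CommRing R] [LinearOrder R] [IsStrictOrderedRing R]
    {s x : R} (h : s * x = |x|) : s * |x| = x := by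
  rcases eq_or_ne x 0 with rfl | hx
  · rw [abs_zero, mul_zero]
  · refine mul_right_cancel₀ hx ?_
    rw [mul_right_comm, h, abs_mul_abs_self]

theorem real_sign_mul_self (x : ℝ) : Real.sign x * x = |x| := by
  rcases lt_trichotomy x 0 with hx | rfl | hx
  · rw [sign_of_neg hx, neg_one_mul, abs_of_neg hx]
  · rw [mul_zero, abs_zero]
  · rw [sign_of_pos hx, one_mul, abs_of_pos hx]

theorem sqrt_div_mul_sqrt_comm {x y : ℝ} (hx : 0 ≤ x) (hy : 0 ≤ y) (z : ℝ) :
    √(x / z) * √y = √(y / z) * √x := by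
  rw [sqrt_div hx, sqrt_div hy, div_mul_eq_mul_div, div_mul_eq_mul_div, mul_comm √x]

theorem div_sqrt_sq_add_div_sqrt_sq {x y : ℝ} (h : x ^ 2 + y ^ 2 ≠ 0) :
    (x / √(x ^ 2 + y ^ 2)) ^ 2 + (y / √(x ^ 2 + y ^ 2)) ^ 2 = 1 := by
  rw [div_pow, div_pow, ← add_div, sq_sqrt (by positivity), div_self h]

section Speeds

/-- The discriminant of the magnetosonic quadratic `z² - (c² + a² + d²) z + c² a²`, whose roots are
the squares of the fast and slow speeds. Here `c` is the sound speed, and `a`, `d` are the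
Alfvén speeds of the normal and transverse magnetic fields. -/
noncomputable def magnetosonicDiscrim (c a d : ℝ) : ℝ :=
  (c ^ 2 + a ^ 2 + d ^ 2) ^ 2 - 4 * c ^ 2 * a ^ 2

/-- The fast magnetosonic speed `c_f`, the square root of the larger root of the magnetosonic
quadratic. -/
noncomputable def fastSpeed (c a d : ℝ) : ℝ :=
  √((c ^ 2 + a ^ 2 + d ^ 2 + √(magnetosonicDiscrim c a d)) / 2)

/-- The slow magnetosonic speed `c_s`, the square root of the smaller root of the magnetosonic
quadratic. -/
noncomputable def slowSpeed (c a d : ℝ) : ℝ :=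
  √((c ^ 2 + a ^ 2 + d ^ 2 - √(magnetosonicDiscrim c a d)) / 2)

variable (c a d : ℝ)

theorem magnetosonicDiscrim_nonneg : 0 ≤ magnetosonicDiscrim c a d := by
  have h : magnetosonicDiscrim c a d
      = (c ^ 2 - a ^ 2) ^ 2 + 2 * (c ^ 2 + a ^ 2) * d ^ 2 + (d ^ 2) ^ 2 := by
    rw [magnetosonicDiscrim]; ring
  rw [h]; positivity

theorem sqrt_magnetosonicDiscrim_le : √(magnetosonicDiscrim c a d) ≤ c ^ 2 + a ^ 2 + d ^ 2 :=
  sqrt_le_iff.mpr ⟨by positivity, sub_le_self _ (by positivity)⟩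

theorem fastSpeed_sq :
    fastSpeed c a d ^ 2 = (c ^ 2 + a ^ 2 + d ^ 2 + √(magnetosonicDiscrim c a d)) / 2 :=
  sq_sqrt (by positivity)

theorem slowSpeed_sq :
    slowSpeed c a d ^ 2 = (c ^ 2 + a ^ 2 + d ^ 2 - √(magnetosonicDiscrim c a d)) / 2 :=
  sq_sqrt (div_nonneg (sub_nonneg.mpr (sqrt_magnetosonicDiscrim_le c a d)) zero_le_two)

theorem slowSpeed_sq_le_fastSpeed_sq : slowSpeed c a d ^ 2 ≤ fastSpeed c a d ^ 2 := by
  rw [slowSpeed_sq, fastSpeed_sq]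
  linarith [sqrt_nonneg (magnetosonicDiscrim c a d)]

theorem fastSpeed_sq_add_slowSpeed_sq :
    fastSpeed c a d ^ 2 + slowSpeed c a d ^ 2 = c ^ 2 + a ^ 2 + d ^ 2 := by
  rw [fastSpeed_sq, slowSpeed_sq]; ring

theorem fastSpeed_sq_mul_slowSpeed_sq :
    fastSpeed c a d ^ 2 * slowSpeed c a d ^ 2 = (c * a) ^ 2 := by
  have hR : √(magnetosonicDiscrim c a d) ^ 2 = (c ^ 2 + a ^ 2 + d ^ 2) ^ 2 - 4 * c ^ 2 * a ^ 2 :=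
    sq_sqrt (magnetosonicDiscrim_nonneg c a d)
  rw [fastSpeed_sq, slowSpeed_sq]
  linear_combination (-1 / 4) * hR

theorem fastSpeed_mul_slowSpeed : fastSpeed c a d * slowSpeed c a d = |c * a| := by
  rw [← sqrt_sq_eq_abs, ← fastSpeed_sq_mul_slowSpeed_sq c a d, ← mul_pow]
  exact (sqrt_sq (mul_nonneg (sqrt_nonneg _) (sqrt_nonneg _))).symm

theorem fastSpeed_gap_mul_slowSpeed_gap :
    (fastSpeed c a d ^ 2 - c ^ 2) * (c ^ 2 - slowSpeed c a d ^ 2) = (c * d) ^ 2 := by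
  linear_combination c ^ 2 * fastSpeed_sq_add_slowSpeed_sq c a d
    - fastSpeed_sq_mul_slowSpeed_sq c a d

theorem sq_mem_Icc_slowSpeed_sq_fastSpeed_sq :
    c ^ 2 ∈ Set.Icc (slowSpeed c a d ^ 2) (fastSpeed c a d ^ 2) := by
  have hgap : 0 ≤ (fastSpeed c a d ^ 2 - c ^ 2) * (c ^ 2 - slowSpeed c a d ^ 2) :=
    fastSpeed_gap_mul_slowSpeed_gap c a d ▸ sq_nonneg (c * d)
  rcases mul_nonneg_iff.mp hgap with ⟨hf, hs⟩ | ⟨hf, hs⟩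
  · exact ⟨sub_nonneg.mp hs, sub_nonneg.mp hf⟩
  · have hle := slowSpeed_sq_le_fastSpeed_sq c a d
    constructor <;> linarith

theorem sq_le_fastSpeed_sq : c ^ 2 ≤ fastSpeed c a d ^ 2 :=
  (sq_mem_Icc_slowSpeed_sq_fastSpeed_sq c a d).2

theorem slowSpeed_sq_le_sq : slowSpeed c a d ^ 2 ≤ c ^ 2 :=
  (sq_mem_Icc_slowSpeed_sq_fastSpeed_sq c a d).1

theorem sqrt_fastSpeed_gap_mul_sqrt_slowSpeed_gap :
    √(fastSpeed c a d ^ 2 - c ^ 2) * √(c ^ 2 - slowSpeed c a d ^ 2) = |c * d| := by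
  rw [← sqrt_mul (sub_nonneg.mpr (sq_le_fastSpeed_sq c a d)), fastSpeed_gap_mul_slowSpeed_gap,
    sqrt_sq_eq_abs]

end Speeds

section AlfvenSpeeds

variable {ρ : ℝ} (c b₁ b₂ b₃ : ℝ)

theorem alfvenSpeed_sq_add_sq (hρ : 0 ≤ ρ) :
    (b₁ / √ρ) ^ 2 + (√(b₂ ^ 2 + b₃ ^ 2) / √ρ) ^ 2 = (b₁ ^ 2 + b₂ ^ 2 + b₃ ^ 2) / ρ := by
  rw [div_pow, div_pow, sq_sqrt hρ, sq_sqrt (by positivity)]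
  ring

theorem magnetosonicDiscrim_alfvenSpeed (hρ : 0 ≤ ρ) :
    magnetosonicDiscrim c (b₁ / √ρ) (√(b₂ ^ 2 + b₃ ^ 2) / √ρ) =
      (c ^ 2 + (b₁ ^ 2 + b₂ ^ 2 + b₃ ^ 2) / ρ) ^ 2 - 4 * c ^ 2 * b₁ ^ 2 / ρ := by
  rw [magnetosonicDiscrim, add_assoc (c ^ 2), alfvenSpeed_sq_add_sq b₁ b₂ b₃ hρ, div_pow,
    sq_sqrt hρ, mul_div_assoc]

theorem fastSpeed_alfvenSpeed (hρ : 0 ≤ ρ) :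
    fastSpeed c (b₁ / √ρ) (√(b₂ ^ 2 + b₃ ^ 2) / √ρ) =
      √((c ^ 2 + (b₁ ^ 2 + b₂ ^ 2 + b₃ ^ 2) / ρ +
        √((c ^ 2 + (b₁ ^ 2 + b₂ ^ 2 + b₃ ^ 2) / ρ) ^ 2 - 4 * c ^ 2 * b₁ ^ 2 / ρ)) / 2) := by
  rw [fastSpeed, magnetosonicDiscrim_alfvenSpeed c b₁ b₂ b₃ hρ,
    add_assoc (c ^ 2) ((b₁ / √ρ) ^ 2), alfvenSpeed_sq_add_sq b₁ b₂ b₃ hρ]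

theorem slowSpeed_alfvenSpeed (hρ : 0 ≤ ρ) :
    slowSpeed c (b₁ / √ρ) (√(b₂ ^ 2 + b₃ ^ 2) / √ρ) =
      √((c ^ 2 + (b₁ ^ 2 + b₂ ^ 2 + b₃ ^ 2) / ρ -
        √((c ^ 2 + (b₁ ^ 2 + b₂ ^ 2 + b₃ ^ 2) / ρ) ^ 2 - 4 * c ^ 2 * b₁ ^ 2 / ρ)) / 2) := by
  rw [slowSpeed, magnetosonicDiscrim_alfvenSpeed c b₁ b₂ b₃ hρ,
    add_assoc (c ^ 2) ((b₁ / √ρ) ^ 2), alfvenSpeed_sq_add_sq b₁ b₂ b₃ hρ]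

end AlfvenSpeeds

section Eigenvectors

/-- The matrix `D^x` of one-dimensional ideal MHD in the primitive variables
`(ρ, u, v, w, p, b₁, b₂, b₃)`. The equation of state enters only through the sound speed `c`: the
entry `γ p` of an ideal gas is written `ρ c²`. -/
noncomputable def mhdMatrix (ρ u c b₁ b₂ b₃ : ℝ) : Matrix (Fin 8) (Fin 8) ℝ :=
  !![u, ρ, 0, 0, 0, 0, 0, 0;
     0, u, 0, 0, 1 / ρ, 0, b₂ / ρ, b₃ / ρ;
     0, 0, u, 0, 0, 0, -b₁ / ρ, 0;
     0, 0, 0, u, 0, 0, 0, -b₁ / ρ;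
     0, ρ * c ^ 2, 0, 0, u, 0, 0, 0;
     0, 0, 0, 0, 0, u, 0, 0;
     0, b₂, -b₁, 0, 0, 0, u, 0;
     0, b₃, 0, -b₁, 0, 0, 0, u]

/-- The common shape of the magnetosonic eigenvectors of `mhdMatrix`, for a wave of relative speed
`l`. The companion speed `m` is the slow speed for a fast wave and vice versa, `κ` and `τ` are the
weights of the acoustic and the transverse part, `σ` is the sign of the normal field and `(n₂, n₃)`
the direction of the transverse field. Left-going waves have `l` and `m` negative. -/
noncomputable def magnetosonicVector (ρ c κ τ l m σ n₂ n₃ : ℝ) : Fin 8 → ℝ :=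
  ![κ * ρ, κ * l, -(τ * m * σ * n₂), -(τ * m * σ * n₃), κ * ρ * c ^ 2, 0,
    τ * √ρ * c * n₂, τ * √ρ * c * n₃]

theorem mhdMatrix_mulVec (ρ u c b₁ b₂ b₃ x₀ x₁ x₂ x₃ x₄ x₅ x₆ x₇ : ℝ) :
    (mhdMatrix ρ u c b₁ b₂ b₃).mulVec ![x₀, x₁, x₂, x₃, x₄, x₅, x₆, x₇] =
      ![u * x₀ + ρ * x₁, u * x₁ + (x₄ + b₂ * x₆ + b₃ * x₇) / ρ, u * x₂ - b₁ * x₆ / ρ,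
        u * x₃ - b₁ * x₇ / ρ, ρ * c ^ 2 * x₁ + u * x₄, u * x₅, b₂ * x₁ - b₁ * x₂ + u * x₆,
        b₃ * x₁ - b₁ * x₃ + u * x₇] := by
  simp only [mhdMatrix, Matrix.cons_mulVec, Matrix.empty_mulVec, Matrix.cons_dotProduct_cons,
    Matrix.dotProduct_of_isEmpty]
  congrm ![?_, ?_, ?_, ?_, ?_, ?_, ?_, ?_] <;> ring

variable {ρ c b₁ B κ τ l m σ n₂ n₃ : ℝ}

theorem mhdMatrix_mulVec_magnetosonicVector (u : ℝ) (hρ : 0 < ρ) (hc : c ≠ 0)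
    (hn : n₂ ^ 2 + n₃ ^ 2 = 1) (hσ : σ * b₁ = |b₁|) (hlm : l * m = c * (|b₁| / √ρ))
    (hl : κ * (l ^ 2 - c ^ 2) = τ * (c * (B / √ρ)))
    (hm : τ * (c ^ 2 - m ^ 2) = κ * (c * (B / √ρ))) :
    (mhdMatrix ρ u c b₁ (B * n₂) (B * n₃)).mulVec (magnetosonicVector ρ c κ τ l m σ n₂ n₃) =
      (u + l) • magnetosonicVector ρ c κ τ l m σ n₂ n₃ := by
  obtain ⟨t, ht, rfl⟩ : ∃ t, 0 < t ∧ ρ = t ^ 2 := ⟨√ρ, sqrt_pos.mpr hρ, (sq_sqrt hρ.le).symm⟩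
  rw [sqrt_sq ht.le] at hlm hl hm
  have normal_momentum : (κ * t ^ 2 * c ^ 2 + B * (τ * t * c)) / t ^ 2 = κ * l ^ 2 := by
    field_simp at hl ⊢
    linear_combination -hl
  have transverse_momentum : b₁ * (τ * t * c) / t ^ 2 = l * (τ * m * σ) := by
    have hσ' := mul_abs_eq_of_mul_eq_abs hσ
    field_simp at hlm ⊢
    linear_combination (-c * τ) * hσ' - τ * σ * hlm
  have magnetic : B * (κ * l) + b₁ * (τ * m * σ) = l * (τ * t * c) := by
    refine mul_left_cancel₀ hc ?_
    field_simp at hlm hm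
    linear_combination (c * τ * m) * hσ - τ * m * hlm - l * hm
  rw [magnetosonicVector, sqrt_sq ht.le, mhdMatrix_mulVec]
  simp only [Matrix.smul_cons, smul_eq_mul, Matrix.smul_empty]
  congrm ![?_, ?_, ?_, ?_, ?_, ?_, ?_, ?_]
  · ring
  · linear_combination normal_momentum + (B * (τ * t * c) / t ^ 2) * hn
  · linear_combination -n₂ * transverse_momentum
  · linear_combination -n₃ * transverse_momentum
  · ring
  · ring
  · linear_combination n₂ * magnetic
  · linear_combination n₃ * magnetic

/-- The direction `(n₂, n₃)` and the sign `σ` are separate from the field so that every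
normalization at `B = 0` or `b₁ = 0` is covered. -/
theorem mhd_fast_eigenvectors_general (u : ℝ) (hρ : 0 < ρ) (hc : 0 < c) (hB : 0 ≤ B)
    (hn : n₂ ^ 2 + n₃ ^ 2 = 1) (hσ : σ * b₁ = |b₁|) {cf cs αf αs : ℝ}
    (hcf : cf = fastSpeed c (b₁ / √ρ) (B / √ρ)) (hcs : cs = slowSpeed c (b₁ / √ρ) (B / √ρ))
    (hα : αs * √(c ^ 2 - cs ^ 2) = αf * √(cf ^ 2 - c ^ 2)) :
    (mhdMatrix ρ u c b₁ (B * n₂) (B * n₃)).mulVec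
        (magnetosonicVector ρ c αf αs (-cf) (-cs) σ n₂ n₃) =
      (u - cf) • magnetosonicVector ρ c αf αs (-cf) (-cs) σ n₂ n₃ ∧
    (mhdMatrix ρ u c b₁ (B * n₂) (B * n₃)).mulVec (magnetosonicVector ρ c αf αs cf cs σ n₂ n₃) =
      (u + cf) • magnetosonicVector ρ c αf αs cf cs σ n₂ n₃ := by
  have hprod : cf * cs = c * (|b₁| / √ρ) := by
    rw [hcf, hcs, fastSpeed_mul_slowSpeed, abs_mul, abs_div, abs_of_pos hc,
      abs_of_nonneg (sqrt_nonneg ρ)]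
  have hgap : √(cf ^ 2 - c ^ 2) * √(c ^ 2 - cs ^ 2) = c * (B / √ρ) := by
    rw [hcf, hcs, sqrt_fastSpeed_gap_mul_sqrt_slowSpeed_gap, abs_of_nonneg (by positivity)]
  have hcf_gap : √(cf ^ 2 - c ^ 2) ^ 2 = cf ^ 2 - c ^ 2 :=
    sq_sqrt (sub_nonneg.mpr (hcf ▸ sq_le_fastSpeed_sq ..))
  have hcs_gap : √(c ^ 2 - cs ^ 2) ^ 2 = c ^ 2 - cs ^ 2 :=
    sq_sqrt (sub_nonneg.mpr (hcs ▸ slowSpeed_sq_le_sq ..))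
  have hfast : αf * (cf ^ 2 - c ^ 2) = αs * (c * (B / √ρ)) := by
    linear_combination -αf * hcf_gap - √(cf ^ 2 - c ^ 2) * hα + αs * hgap
  have hslow : αs * (c ^ 2 - cs ^ 2) = αf * (c * (B / √ρ)) := by
    linear_combination -αs * hcs_gap + √(c ^ 2 - cs ^ 2) * hα + αf * hgap
  rw [sub_eq_add_neg]
  exact ⟨mhdMatrix_mulVec_magnetosonicVector u hρ hc.ne' hn hσ (by rwa [neg_mul_neg])
      (by rwa [neg_sq]) (by rwa [neg_sq]),
    mhdMatrix_mulVec_magnetosonicVector u hρ hc.ne' hn hσ hprod hfast hslow⟩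

end Eigenvectors

/-- The fast magnetosonic eigenvectors of the primitive-variable MHD matrix `D^x`:
`D^x r₁ = (u − c_f) r₁` and `D^x r₈ = (u + c_f) r₈`. -/
theorem mhd_fast_eigenvectors
    (γ ρ p u v w b1 b2 b3 c ca D cf cs β1 β2 β3 αf αs : ℝ)
    (hγ : 1 < γ) (hρ : 0 < ρ) (hp : 0 < p) (hb : b2 ^ 2 + b3 ^ 2 > 0)
    (Dx : Matrix (Fin 8) (Fin 8) ℝ)
    (hDx : Dx = !![u, ρ, 0, 0, 0, 0, 0, 0;
                   0, u, 0, 0, 1/ρ, 0, b2/ρ, b3/ρ;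
                   0, 0, u, 0, 0, 0, -b1/ρ, 0;
                   0, 0, 0, u, 0, 0, 0, -b1/ρ;
                   0, γ*p, 0, 0, u, 0, 0, 0;
                   0, 0, 0, 0, 0, u, 0, 0;
                   0, b2, -b1, 0, 0, 0, u, 0;
                   0, b3, 0, -b1, 0, 0, 0, u])
    (hc : c = Real.sqrt (γ * p / ρ))
    (hca : ca = Real.sqrt (b1 ^ 2 / ρ))
    (hD : D = (c ^ 2 + (b1 ^ 2 + b2 ^ 2 + b3 ^ 2) / ρ) ^ 2 - 4 * c ^ 2 * b1 ^ 2 / ρ)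
    (hcf : cf = Real.sqrt ((c ^ 2 + (b1 ^ 2 + b2 ^ 2 + b3 ^ 2) / ρ + Real.sqrt D) / 2))
    (hcs : cs = Real.sqrt ((c ^ 2 + (b1 ^ 2 + b2 ^ 2 + b3 ^ 2) / ρ - Real.sqrt D) / 2))
    (hβ1 : β1 = Real.sign b1)
    (hβ2 : β2 = b2 / Real.sqrt (b2 ^ 2 + b3 ^ 2))
    (hβ3 : β3 = b3 / Real.sqrt (b2 ^ 2 + b3 ^ 2))
    (hαf : αf = Real.sqrt ((c ^ 2 - cs ^ 2) / (cf ^ 2 - cs ^ 2)))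
    (hαs : αs = Real.sqrt ((cf ^ 2 - c ^ 2) / (cf ^ 2 - cs ^ 2))) :
    Dx.mulVec ![αf * ρ, -αf * cf, αs * cs * β1 * β2, αs * cs * β1 * β3,
        αf * ρ * c ^ 2, 0, αs * Real.sqrt ρ * c * β2, αs * Real.sqrt ρ * c * β3] =
      (u - cf) • ![αf * ρ, -αf * cf, αs * cs * β1 * β2, αs * cs * β1 * β3,
        αf * ρ * c ^ 2, 0, αs * Real.sqrt ρ * c * β2, αs * Real.sqrt ρ * c * β3] ∧
    Dx.mulVec ![αf * ρ, αf * cf, -(αs * cs * β1 * β2), -(αs * cs * β1 * β3),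
        αf * ρ * c ^ 2, 0, αs * Real.sqrt ρ * c * β2, αs * Real.sqrt ρ * c * β3] =
      (u + cf) • ![αf * ρ, αf * cf, -(αs * cs * β1 * β2), -(αs * cs * β1 * β3),
        αf * ρ * c ^ 2, 0, αs * Real.sqrt ρ * c * β2, αs * Real.sqrt ρ * c * β3] := by
  have hx : 0 < γ * p / ρ := by positivity
  have hγp : γ * p = ρ * c ^ 2 := by rw [hc, sq_sqrt hx.le, mul_div_cancel₀ _ hρ.ne']
  have hc0 : 0 < c := hc ▸ sqrt_pos.mpr hx
  have hB : √(b2 ^ 2 + b3 ^ 2) ≠ 0 := (sqrt_pos.mpr hb).ne'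
  rw [hD, ← fastSpeed_alfvenSpeed c b1 b2 b3 hρ.le] at hcf
  rw [hD, ← slowSpeed_alfvenSpeed c b1 b2 b3 hρ.le] at hcs
  have hα : αs * √(c ^ 2 - cs ^ 2) = αf * √(cf ^ 2 - c ^ 2) := by
    rw [hαs, hαf]
    exact sqrt_div_mul_sqrt_comm (sub_nonneg.mpr (hcf ▸ sq_le_fastSpeed_sq ..))
      (sub_nonneg.mpr (hcs ▸ slowSpeed_sq_le_sq ..)) _
  have eigen := mhd_fast_eigenvectors_general u hρ hc0 (sqrt_nonneg _)
    (div_sqrt_sq_add_div_sqrt_sq hb.ne') (real_sign_mul_self b1) hcf hcs hα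
  rw [mul_div_cancel₀ _ hB, mul_div_cancel₀ _ hB, mhdMatrix, ← hγp, ← hDx, ← hβ1, ← hβ2, ← hβ3]
    at eigen
  simpa only [magnetosonicVector, neg_mul, mul_neg, neg_neg] using eigen
end

section
/- The slow magnetosonic eigenvectors of the primitive-variable MHD matrix: under the stated hypotheses, the vector r₃ = (α̂_s ρ, −α̂_s c_s, −α̂_f c_f β1 β2, −α̂_f c_f β1 β3, α̂_s ρ c², 0, −α̂_f √ρ c β2, −α̂_f √ρ c β3)ᵀ satisfies D^x r₃ = (u − c_s) r₃, and the vector r₆ = (α̂_s ρ, α̂_s c_s, α̂_f c_f β1 β2, α̂_f c_f β1 β3, α̂_s ρ c², 0, −α̂_f √ρ c β2, −α̂_f √ρ c β3)ᵀ satisfies D^x r₆ = (u + c_s) r₆. -/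
/-!
For a plane wave travelling at speed `s` relative to the fluid, whose transverse velocity and
magnetic perturbations are both parallel to the transverse field `b⊥`, the eight equations reduce
to three scalar ones: normal momentum, transverse momentum and induction.  The magnetosonic speeds
enter only through the two Vieta relations of the dispersion quadratic
`s⁴ - (c² + a² + t²) s² + c² a² = 0`, where `a` and `t` are the normal and transverse Alfvén speeds:
`c_f² + c_s² = c² + a² + t²` and `c_f c_s = c a`.  These give `(c_f² - c²)(c² - c_s²) = (c t)²`,
which ties the two amplitudes together.  The three equations are invariant, up to an overall sign,
under a simultaneous change of sign of the velocities and `s`, so both slow waves are treated at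
once.
-/

namespace MHD

open scoped Matrix

section PrimitiveMatrix

variable {K : Type*} [Field K]

/-- The matrix `D^x` of the MHD equations in the primitive variables
`(ρ, u, v, w, p, b1, b2, b3)`, for waves in the `x`-direction. -/
def primitiveMatrix (γ ρ p u b1 b2 b3 : K) : Matrix (Fin 8) (Fin 8) K :=
  !![u, ρ, 0, 0, 0, 0, 0, 0;
     0, u, 0, 0, 1 / ρ, 0, b2 / ρ, b3 / ρ;
     0, 0, u, 0, 0, 0, -b1 / ρ, 0;
     0, 0, 0, u, 0, 0, 0, -b1 / ρ;
     0, γ * p, 0, 0, u, 0, 0, 0;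
     0, 0, 0, 0, 0, u, 0, 0;
     0, b2, -b1, 0, 0, 0, u, 0;
     0, b3, 0, -b1, 0, 0, 0, u]

theorem primitiveMatrix_mulVec (γ ρ p u b1 b2 b3 x0 x1 x2 x3 x4 x5 x6 x7 : K) :
    primitiveMatrix γ ρ p u b1 b2 b3 *ᵥ ![x0, x1, x2, x3, x4, x5, x6, x7] =
      ![u * x0 + ρ * x1, u * x1 + (x4 + b2 * x6 + b3 * x7) / ρ, u * x2 - b1 * x6 / ρ,
        u * x3 - b1 * x7 / ρ, γ * p * x1 + u * x4, u * x5, b2 * x1 - b1 * x2 + u * x6,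
        b3 * x1 - b1 * x3 + u * x7] := by
  ext i
  fin_cases i <;>
    simp [primitiveMatrix, Matrix.mulVec, dotProduct, Fin.sum_univ_succ] <;> ring

theorem primitiveMatrix_mulVec_eq_smul {γ ρ p u b1 b2 b3 c s B β2 β3 α q h : K} (hρ : ρ ≠ 0)
    (hc : γ * p = ρ * c ^ 2) (hb2 : b2 = B * β2) (hb3 : b3 = B * β3)
    (hβ : β2 ^ 2 + β3 ^ 2 = 1)
    (normal_momentum : α * ρ * (c ^ 2 - s ^ 2) = B * h)
    (transverse_momentum : b1 * h = ρ * s * q)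
    (induction_eq : s * (α * B + h) = b1 * q) :
    primitiveMatrix γ ρ p u b1 b2 b3 *ᵥ
        ![α * ρ, α * s, q * β2, q * β3, α * ρ * c ^ 2, 0, -(h * β2), -(h * β3)] =
      (u + s) •
        ![α * ρ, α * s, q * β2, q * β3, α * ρ * c ^ 2, 0, -(h * β2), -(h * β3)] := by
  subst hb2 hb3
  simp only [primitiveMatrix_mulVec, Matrix.smul_cons, Matrix.smul_empty, smul_eq_mul,
    Matrix.vecCons_inj, and_true]
  refine ⟨?density, ?normal, ?transverse2, ?transverse3, ?pressure, ?field1, ?field2, ?field3⟩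
  case density => ring
  case normal =>
    field_simp
    linear_combination normal_momentum - B * h * hβ
  case transverse2 =>
    field_simp
    linear_combination β2 * transverse_momentum
  case transverse3 =>
    field_simp
    linear_combination β3 * transverse_momentum
  case pressure => linear_combination α * s * hc
  case field1 => ring
  case field2 => linear_combination β2 * induction_eq
  case field3 => linear_combination β3 * induction_eq

end PrimitiveMatrix

/-- `cf` and `cs` are the fast and slow magnetosonic speeds of a medium with sound speed `c`,
normal Alfvén speed `a` and transverse Alfvén speed `t`: the Vieta relations say that `cf ^ 2` and
`cs ^ 2` are the roots of `x ^ 2 - (c ^ 2 + a ^ 2 + t ^ 2) * x + (c * a) ^ 2`. -/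
structure IsMagnetosonicPair (c a t cf cs : ℝ) : Prop where
  slow_nonneg : 0 ≤ cs
  slow_le_fast : cs ≤ cf
  sq_add_sq : cf ^ 2 + cs ^ 2 = c ^ 2 + a ^ 2 + t ^ 2
  mul_eq : cf * cs = c * a

/-- The amplitude `α̂_f` of the fast wave in the normalized eigenvectors. -/
noncomputable def fastAmplitude (c cf cs : ℝ) : ℝ :=
  √((c ^ 2 - cs ^ 2) / (cf ^ 2 - cs ^ 2))

/-- The amplitude `α̂_s` of the slow wave in the normalized eigenvectors. -/
noncomputable def slowAmplitude (c cf cs : ℝ) : ℝ :=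
  √((cf ^ 2 - c ^ 2) / (cf ^ 2 - cs ^ 2))

theorem sqrt_div_mul_eq_sqrt_div_mul_sqrt {x y : ℝ} (hx : 0 ≤ x) (hy : 0 ≤ y) (z : ℝ) :
    √(x / z) * y = √(y / z) * √(x * y) := by
  calc √(x / z) * y = √x / √z * (√y * √y) := by rw [Real.sqrt_div hx, Real.mul_self_sqrt hy]
    _ = √y / √z * (√x * √y) := by ring
    _ = √(y / z) * √(x * y) := by rw [Real.sqrt_div hy, Real.sqrt_mul hx]

namespace IsMagnetosonicPair

variable {c a t cf cs : ℝ}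

theorem fast_sub_slow_sq (h : IsMagnetosonicPair c a t cf cs) :
    (cf - cs) ^ 2 = (c - a) ^ 2 + t ^ 2 := by
  linear_combination h.sq_add_sq - 2 * h.mul_eq

theorem slow_lt_fast (h : IsMagnetosonicPair c a t cf cs) (ht : t ≠ 0) : cs < cf := by
  refine h.slow_le_fast.lt_of_ne' fun heq => ?_
  have hpos : 0 < (cf - cs) ^ 2 := by rw [h.fast_sub_slow_sq]; positivity
  simp [heq] at hpos

theorem fast_sq_sub_mul_sub_slow_sq (h : IsMagnetosonicPair c a t cf cs) :
    (cf ^ 2 - c ^ 2) * (c ^ 2 - cs ^ 2) = (c * t) ^ 2 := by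
  linear_combination c ^ 2 * h.sq_add_sq - (cf * cs + c * a) * h.mul_eq

theorem slow_sq_le_fast_sq (h : IsMagnetosonicPair c a t cf cs) : cs ^ 2 ≤ cf ^ 2 :=
  pow_le_pow_left₀ h.slow_nonneg h.slow_le_fast 2

theorem slow_sq_le_sound_sq (h : IsMagnetosonicPair c a t cf cs) : cs ^ 2 ≤ c ^ 2 := by
  by_contra! hlt
  have hneg : (cf ^ 2 - c ^ 2) * (c ^ 2 - cs ^ 2) < 0 :=
    mul_neg_of_pos_of_neg (by linarith [h.slow_sq_le_fast_sq]) (by linarith)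
  exact hneg.not_ge (h.fast_sq_sub_mul_sub_slow_sq ▸ sq_nonneg _)

theorem sound_sq_le_fast_sq (h : IsMagnetosonicPair c a t cf cs) : c ^ 2 ≤ cf ^ 2 := by
  by_contra! hlt
  have hneg : (cf ^ 2 - c ^ 2) * (c ^ 2 - cs ^ 2) < 0 :=
    mul_neg_of_neg_of_pos (by linarith) (by linarith [h.slow_sq_le_fast_sq])
  exact hneg.not_ge (h.fast_sq_sub_mul_sub_slow_sq ▸ sq_nonneg _)

theorem slowAmplitude_mul (h : IsMagnetosonicPair c a t cf cs) (hc : 0 ≤ c) (ht : 0 ≤ t) :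
    slowAmplitude c cf cs * (c ^ 2 - cs ^ 2) = fastAmplitude c cf cs * (c * t) := by
  rw [slowAmplitude, fastAmplitude,
    sqrt_div_mul_eq_sqrt_div_mul_sqrt (sub_nonneg.2 h.sound_sq_le_fast_sq)
      (sub_nonneg.2 h.slow_sq_le_sound_sq),
    h.fast_sq_sub_mul_sub_slow_sq, Real.sqrt_sq (mul_nonneg hc ht)]

theorem fastAmplitude_mul (h : IsMagnetosonicPair c a t cf cs) (hc : 0 ≤ c) (ht : 0 ≤ t) :
    fastAmplitude c cf cs * (cf ^ 2 - c ^ 2) = slowAmplitude c cf cs * (c * t) := by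
  rw [slowAmplitude, fastAmplitude,
    sqrt_div_mul_eq_sqrt_div_mul_sqrt (sub_nonneg.2 h.slow_sq_le_sound_sq)
      (sub_nonneg.2 h.sound_sq_le_fast_sq),
    mul_comm (c ^ 2 - cs ^ 2), h.fast_sq_sub_mul_sub_slow_sq, Real.sqrt_sq (mul_nonneg hc ht)]

theorem slow_mul_amplitude_add_amplitude (h : IsMagnetosonicPair c a t cf cs)
    (hc : 0 ≤ c) (ht : 0 < t) :
    cs * (slowAmplitude c cf cs * t + fastAmplitude c cf cs * c) =
      fastAmplitude c cf cs * cf * a := by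
  -- Cancelling `cf`, not `c`, includes the pressureless case `c = 0`.
  have hcf : cf ≠ 0 := (h.slow_nonneg.trans_lt (h.slow_lt_fast ht.ne')).ne'
  apply mul_left_cancel₀ hcf
  linear_combination (slowAmplitude c cf cs * t + fastAmplitude c cf cs * c) * h.mul_eq -
    a * h.fastAmplitude_mul hc ht.le

end IsMagnetosonicPair

/-- The slow magnetosonic eigenvector of the primitive matrix: `r₆` (forward wave) for `σ = 1` and
`r₃` (backward wave) for `σ = -1`.  The sign `σ` multiplies the speeds, hence the velocities. -/
noncomputable def slowEigenvector (ρ c cf cs β1 β2 β3 σ : ℝ) : Fin 8 → ℝ :=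
  let αf := fastAmplitude c cf cs
  let αs := slowAmplitude c cf cs
  ![αs * ρ, αs * (σ * cs), αf * (σ * cf) * β1 * β2, αf * (σ * cf) * β1 * β3,
    αs * ρ * c ^ 2, 0, -(αf * √ρ * c * β2), -(αf * √ρ * c * β3)]

theorem IsMagnetosonicPair.primitiveMatrix_mulVec_slowEigenvector
    {γ ρ p b1 b2 b3 c a t cf cs β1 β2 β3 σ : ℝ} (h : IsMagnetosonicPair c a t cf cs)
    (hρ : 0 < ρ) (hc : 0 ≤ c) (ht : 0 < t) (hγp : γ * p = ρ * c ^ 2)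
    (hb1 : b1 = √ρ * a * β1) (hb1_mul : b1 * β1 = √ρ * a)
    (hb2 : b2 = √ρ * t * β2) (hb3 : b3 = √ρ * t * β3) (hβ : β2 ^ 2 + β3 ^ 2 = 1)
    (hσ : σ ^ 2 = 1) (u : ℝ) :
    primitiveMatrix γ ρ p u b1 b2 b3 *ᵥ slowEigenvector ρ c cf cs β1 β2 β3 σ =
      (u + σ * cs) • slowEigenvector ρ c cf cs β1 β2 β3 σ := by
  have hρ2 : √ρ ^ 2 = ρ := Real.sq_sqrt hρ.le
  apply primitiveMatrix_mulVec_eq_smul hρ.ne' hγp hb2 hb3 hβ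
  case normal_momentum =>
    linear_combination ρ * h.slowAmplitude_mul hc ht.le -
      slowAmplitude c cf cs * ρ * cs ^ 2 * hσ - fastAmplitude c cf cs * c * t * hρ2
  case transverse_momentum =>
    linear_combination fastAmplitude c cf cs * √ρ * c * hb1 +
      fastAmplitude c cf cs * a * β1 * c * hρ2 -
      ρ * fastAmplitude c cf cs * β1 * (cf * cs * hσ + h.mul_eq)
  case induction_eq =>
    linear_combination σ * √ρ * h.slow_mul_amplitude_add_amplitude hc ht -
      fastAmplitude c cf cs * σ * cf * hb1_mul

theorem isMagnetosonicPair_sqrt {c a t S D : ℝ} (hc : 0 ≤ c) (ha : 0 ≤ a)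
    (hS : S = c ^ 2 + a ^ 2 + t ^ 2) (hD : D = S ^ 2 - 4 * (c * a) ^ 2) :
    IsMagnetosonicPair c a t (√((S + √D) / 2)) (√((S - √D) / 2)) := by
  have hS0 : 0 ≤ S := by rw [hS]; positivity
  have hD0 : 0 ≤ D := by
    have hfactor : D = ((c - a) ^ 2 + t ^ 2) * ((c + a) ^ 2 + t ^ 2) := by rw [hD, hS]; ring
    rw [hfactor]; positivity
  have hDS : √D ≤ S := Real.sqrt_le_iff.2 ⟨hS0, by rw [hD]; linarith [sq_nonneg (c * a)]⟩
  have hfast : 0 ≤ (S + √D) / 2 := by positivity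
  have hslow : 0 ≤ (S - √D) / 2 := by linarith
  refine ⟨Real.sqrt_nonneg _, Real.sqrt_le_sqrt (by linarith [Real.sqrt_nonneg D]), ?_, ?_⟩
  · rw [Real.sq_sqrt hfast, Real.sq_sqrt hslow, ← hS]; ring
  · have hprod : (S + √D) / 2 * ((S - √D) / 2) = (c * a) ^ 2 := by
      linear_combination (-1 / 4) * Real.sq_sqrt hD0 - (1 / 4) * hD
    rw [← Real.sqrt_mul hfast, hprod, Real.sqrt_sq (mul_nonneg hc ha)]

/-- The discriminant `D` of the dispersion quadratic, from which the magnetosonic speeds are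
computed. -/
noncomputable def magnetosonicDiscrim (ρ c b1 b2 b3 : ℝ) : ℝ :=
  (c ^ 2 + (b1 ^ 2 + b2 ^ 2 + b3 ^ 2) / ρ) ^ 2 - 4 * c ^ 2 * b1 ^ 2 / ρ

/-- The fast magnetosonic speed `c_f` for density `ρ`, sound speed `c` and magnetic field
`(b1, b2, b3)`. -/
noncomputable def fastSpeed (ρ c b1 b2 b3 : ℝ) : ℝ :=
  √((c ^ 2 + (b1 ^ 2 + b2 ^ 2 + b3 ^ 2) / ρ + √(magnetosonicDiscrim ρ c b1 b2 b3)) / 2)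

/-- The slow magnetosonic speed `c_s` for density `ρ`, sound speed `c` and magnetic field
`(b1, b2, b3)`. -/
noncomputable def slowSpeed (ρ c b1 b2 b3 : ℝ) : ℝ :=
  √((c ^ 2 + (b1 ^ 2 + b2 ^ 2 + b3 ^ 2) / ρ - √(magnetosonicDiscrim ρ c b1 b2 b3)) / 2)

theorem isMagnetosonicPair_fastSpeed_slowSpeed {ρ c : ℝ} (hρ : 0 ≤ ρ) (hc : 0 ≤ c)
    (b1 b2 b3 : ℝ) :
    IsMagnetosonicPair c √(b1 ^ 2 / ρ) √((b2 ^ 2 + b3 ^ 2) / ρ)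
      (fastSpeed ρ c b1 b2 b3) (slowSpeed ρ c b1 b2 b3) := by
  have ha : √(b1 ^ 2 / ρ) ^ 2 = b1 ^ 2 / ρ := Real.sq_sqrt (by positivity)
  have ht : √((b2 ^ 2 + b3 ^ 2) / ρ) ^ 2 = (b2 ^ 2 + b3 ^ 2) / ρ := Real.sq_sqrt (by positivity)
  apply isMagnetosonicPair_sqrt hc (Real.sqrt_nonneg _)
  · rw [ha, ht]; ring
  · rw [magnetosonicDiscrim, mul_pow, ha]; ring

theorem sqrt_eq_sqrt_mul_sqrt_div {y : ℝ} (hy : 0 < y) (x : ℝ) : √x = √y * √(x / y) := by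
  rw [← Real.sqrt_mul hy.le, mul_div_cancel₀ x hy.ne']

theorem real_sign_eq_coe_sign (x : ℝ) : Real.sign x = SignType.sign x := by
  rcases lt_trichotomy x 0 with hx | rfl | hx
  · simp [Real.sign_of_neg hx, hx]
  · simp
  · simp [Real.sign_of_pos hx, hx]

end MHD

open MHD Matrix in
theorem mhd_slow_eigenvectors_general {γ ρ p b2 b3 c σ : ℝ} (u b1 : ℝ) (hρ : 0 < ρ)
    (hγp : 0 ≤ γ * p) (hb : 0 < b2 ^ 2 + b3 ^ 2) (hc : c = √(γ * p / ρ)) (hσ : σ ^ 2 = 1) :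
    let cf := fastSpeed ρ c b1 b2 b3
    let cs := slowSpeed ρ c b1 b2 b3
    let r := slowEigenvector ρ c cf cs (Real.sign b1)
      (b2 / √(b2 ^ 2 + b3 ^ 2)) (b3 / √(b2 ^ 2 + b3 ^ 2)) σ
    primitiveMatrix γ ρ p u b1 b2 b3 *ᵥ r = (u + σ * cs) • r := by
  have hc0 : 0 ≤ c := hc ▸ Real.sqrt_nonneg _
  have hc2 : γ * p = ρ * c ^ 2 := by
    rw [hc, Real.sq_sqrt (by positivity), mul_div_cancel₀ _ hρ.ne']
  have hB0 : √(b2 ^ 2 + b3 ^ 2) ≠ 0 := (Real.sqrt_pos.2 hb).ne'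
  have habs : √ρ * √(b1 ^ 2 / ρ) = |b1| := by
    rw [← sqrt_eq_sqrt_mul_sqrt_div hρ, Real.sqrt_sq_eq_abs]
  apply IsMagnetosonicPair.primitiveMatrix_mulVec_slowEigenvector
    (isMagnetosonicPair_fastSpeed_slowSpeed hρ.le hc0 b1 b2 b3) hρ hc0 (by positivity) hc2
    (hσ := hσ)
  case hb1 => rw [habs, real_sign_eq_coe_sign, abs_mul_sign]
  case hb1_mul => rw [habs, real_sign_eq_coe_sign, self_mul_sign]
  case hb2 => rw [← sqrt_eq_sqrt_mul_sqrt_div hρ, mul_div_cancel₀ _ hB0]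
  case hb3 => rw [← sqrt_eq_sqrt_mul_sqrt_div hρ, mul_div_cancel₀ _ hB0]
  case hβ => rw [div_pow, div_pow, Real.sq_sqrt hb.le, ← add_div, div_self hb.ne']

/-- The slow magnetosonic eigenvectors of the primitive-variable MHD matrix `D^x`:
`D^x r₃ = (u − c_s) r₃` and `D^x r₆ = (u + c_s) r₆`. -/
theorem mhd_slow_eigenvectors
    (γ ρ p u v w b1 b2 b3 c ca D cf cs β1 β2 β3 αf αs : ℝ)
    (hγ : 1 < γ) (hρ : 0 < ρ) (hp : 0 < p) (hb : b2 ^ 2 + b3 ^ 2 > 0)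
    (Dx : Matrix (Fin 8) (Fin 8) ℝ)
    (hDx : Dx = !![u, ρ, 0, 0, 0, 0, 0, 0;
                   0, u, 0, 0, 1/ρ, 0, b2/ρ, b3/ρ;
                   0, 0, u, 0, 0, 0, -b1/ρ, 0;
                   0, 0, 0, u, 0, 0, 0, -b1/ρ;
                   0, γ*p, 0, 0, u, 0, 0, 0;
                   0, 0, 0, 0, 0, u, 0, 0;
                   0, b2, -b1, 0, 0, 0, u, 0;
                   0, b3, 0, -b1, 0, 0, 0, u])
    (hc : c = Real.sqrt (γ * p / ρ))
    (hca : ca = Real.sqrt (b1 ^ 2 / ρ))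
    (hD : D = (c ^ 2 + (b1 ^ 2 + b2 ^ 2 + b3 ^ 2) / ρ) ^ 2 - 4 * c ^ 2 * b1 ^ 2 / ρ)
    (hcf : cf = Real.sqrt ((c ^ 2 + (b1 ^ 2 + b2 ^ 2 + b3 ^ 2) / ρ + Real.sqrt D) / 2))
    (hcs : cs = Real.sqrt ((c ^ 2 + (b1 ^ 2 + b2 ^ 2 + b3 ^ 2) / ρ - Real.sqrt D) / 2))
    (hβ1 : β1 = Real.sign b1)
    (hβ2 : β2 = b2 / Real.sqrt (b2 ^ 2 + b3 ^ 2))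
    (hβ3 : β3 = b3 / Real.sqrt (b2 ^ 2 + b3 ^ 2))
    (hαf : αf = Real.sqrt ((c ^ 2 - cs ^ 2) / (cf ^ 2 - cs ^ 2)))
    (hαs : αs = Real.sqrt ((cf ^ 2 - c ^ 2) / (cf ^ 2 - cs ^ 2))) :
    Dx.mulVec ![αs * ρ, -αs * cs, -(αf * cf * β1 * β2), -(αf * cf * β1 * β3),
        αs * ρ * c ^ 2, 0, -(αf * Real.sqrt ρ * c * β2), -(αf * Real.sqrt ρ * c * β3)] =
      (u - cs) • ![αs * ρ, -αs * cs, -(αf * cf * β1 * β2), -(αf * cf * β1 * β3),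
        αs * ρ * c ^ 2, 0, -(αf * Real.sqrt ρ * c * β2), -(αf * Real.sqrt ρ * c * β3)] ∧
    Dx.mulVec ![αs * ρ, αs * cs, αf * cf * β1 * β2, αf * cf * β1 * β3,
        αs * ρ * c ^ 2, 0, -(αf * Real.sqrt ρ * c * β2), -(αf * Real.sqrt ρ * c * β3)] =
      (u + cs) • ![αs * ρ, αs * cs, αf * cf * β1 * β2, αf * cf * β1 * β3,
        αs * ρ * c ^ 2, 0, -(αf * Real.sqrt ρ * c * β2), -(αf * Real.sqrt ρ * c * β3)] := by
  subst hDx hD hβ1 hβ2 hβ3 hαf hαs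
  have eigen (σ : ℝ) (hσ : σ ^ 2 = 1) :=
    mhd_slow_eigenvectors_general u b1 hρ (by positivity : 0 ≤ γ * p) hb hc hσ
  simp only [MHD.fastSpeed, MHD.slowSpeed, MHD.magnetosonicDiscrim, ← hcf, ← hcs,
    MHD.primitiveMatrix, MHD.slowEigenvector, MHD.slowAmplitude, MHD.fastAmplitude] at eigen
  constructor
  · simpa only [neg_mul, one_mul, mul_neg, ← sub_eq_add_neg] using eigen (-1) (by norm_num)
  · simpa only [neg_mul, one_mul] using eigen 1 (one_pow 2)
end

section
/- Semi-discrete preservation of the discrete divergence constraint: fix Nₓ, N_y ≥ 1, Δx, Δy > 0, θ > 0, and consider doubly periodic arrays of cell averages (Āⱼₖ), (B̄ⱼₖ) with Āⱼₖ + B̄ⱼₖ = 0 for all j, k. Let the one-sided interface values of A and B be obtained by the generalized minmod reconstruction (in x for the E/W values and in y for the N/S values), let uⱼₖ^{E,W,N,S}, vⱼₖ^{E,W,N,S}, (b1)ⱼₖ^{N,S}, (b2)ⱼₖ^{E,W}, (u_y)ⱼₖ^{E,W}, (v_x)ⱼₖ^{N,S} be arbitrary real arrays, and let s±ⱼ₊₁/₂,ₖ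 and s±ⱼ,ₖ₊₁/₂ be arbitrary speeds with s⁺ > 0 > s⁻ at every interface. Define the central-upwind fluxes 𝓕ⱼ₊₁/₂,ₖ and 𝓖ⱼ,ₖ₊₁/₂ for (A, B) with flux functions F̃ = (uA − b2 u_y, uB + b2 u_y) and G̃ = (vA + b1 v_x, vB − b1 v_x). Then for every cell (j, k), the sum of the right-hand sides of the semi-discrete evolution equations dĀⱼₖ/dt = −(𝓕₁,ⱼ₊₁/₂,ₖ − 𝓕₁,ⱼ₋₁/₂,ₖ)/Δx − (𝓖₁,ⱼ,ₖ₊₁/₂ − 𝓖₁,ⱼ,ₖ₋₁/₂)/Δy and dB̄ⱼₖ/dt = −(𝓕₂,ⱼ₊₁/₂,ₖ − 𝓕₂,ⱼ₋₁/₂,ₖ)/Δx − (𝓖₂,ⱼ,ₖ₊₁/₂ − 𝓖₂,ⱼ,ₖ₋₁/₂)/Δy equals zero; i.e., d(Āⱼₖ + B̄ⱼₖ)/dt = 0, so the constraint Ā + B̄ = 0 is preserved by the semi-discrete scheme. -/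
/-- The minmod function: the minimum of the arguments if all are positive, the maximum if
all are negative, and zero otherwise. -/
noncomputable def minmod (z1 z2 z3 : ℝ) : ℝ :=
  if 0 < z1 ∧ 0 < z2 ∧ 0 < z3 then min z1 (min z2 z3)
  else if z1 < 0 ∧ z2 < 0 ∧ z3 < 0 then max z1 (max z2 z3)
  else 0

/-! Minmod is odd, so the reconstruction carries `B̄ = -Ā` to every interface. There the second
components of `F̃` and `G̃` are the negatives of the first, because the terms `b2 u_y` and `b1 v_x`
enter them with opposite signs. For given speeds the central-upwind flux is linear in the states and
fluxes, so the numerical fluxes of `A` and `B` cancel interface by interface. -/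

theorem minmod_neg (a b c : ℝ) : minmod (-a) (-b) (-c) = -minmod a b c := by
  simp only [minmod, neg_pos, neg_lt_zero, min_neg_neg, max_neg_neg]
  by_cases hpos : 0 < a ∧ 0 < b ∧ 0 < c
  · have hneg : ¬(a < 0 ∧ b < 0 ∧ c < 0) := fun h => h.1.not_gt hpos.1
    rw [if_neg hneg, if_pos hpos, if_pos hpos]
  · rw [if_neg hpos, if_neg hpos, apply_ite Neg.neg, neg_zero]

/-- The generalized minmod slope, with parameter `θ`, of the cell averages `w` on a line of cells
of size `Δ`. -/
noncomputable def minmodSlope (θ Δ : ℝ) (w : ℤ → ℝ) (i : ℤ) : ℝ :=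
  minmod (θ * (w (i + 1) - w i) / Δ) ((w (i + 1) - w (i - 1)) / (2 * Δ))
    (θ * (w i - w (i - 1)) / Δ)

/-- The reconstructed value inside cell `i` at its upper interface `i + 1/2`: the superscripts
`E` and `N` of the scheme. -/
noncomputable def minmodUpperValue (θ Δ : ℝ) (w : ℤ → ℝ) (i : ℤ) : ℝ :=
  w i + Δ / 2 * minmodSlope θ Δ w i

/-- The reconstructed value inside cell `i` at its lower interface `i - 1/2`: the superscripts
`W` and `S` of the scheme. -/
noncomputable def minmodLowerValue (θ Δ : ℝ) (w : ℤ → ℝ) (i : ℤ) : ℝ :=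
  w i - Δ / 2 * minmodSlope θ Δ w i

theorem odd_minmodSlope (θ Δ : ℝ) : (minmodSlope θ Δ).Odd := by
  intro w
  ext i
  simp only [minmodSlope, Pi.neg_apply, ← minmod_neg]
  congr 1 <;> ring

theorem odd_minmodUpperValue (θ Δ : ℝ) : (minmodUpperValue θ Δ).Odd := by
  intro w
  ext i
  simp only [minmodUpperValue, odd_minmodSlope θ Δ w, Pi.neg_apply]
  ring

theorem odd_minmodLowerValue (θ Δ : ℝ) : (minmodLowerValue θ Δ).Odd := by
  intro w
  ext i
  simp only [minmodLowerValue, odd_minmodSlope θ Δ w, Pi.neg_apply]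
  ring

section CentralUpwind

variable {K : Type*} [Field K]

/-- The central-upwind flux at an interface with one-sided speeds `sp`, `sm` (`s⁺`, `s⁻` in the
paper), where `HL`, `HR` are the values of the flux function at the left and right states and
`UL`, `UR` those of the evolved quantity. -/
def centralUpwindFlux (sp sm HL HR UL UR : K) : K :=
  (sp * HL - sm * HR) / (sp - sm) + sp * sm / (sp - sm) * (UR - UL)

theorem centralUpwindFlux_neg (sp sm HL HR UL UR : K) :
    centralUpwindFlux sp sm (-HL) (-HR) (-UL) (-UR) = -centralUpwindFlux sp sm HL HR UL UR := by
  simp only [centralUpwindFlux]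
  ring

/-- The reconstructions `RE`, `RW` act on a line of cells in the `x`-direction and `RN`, `RS` on one
in the `y`-direction, each returning one interface value per cell. -/
theorem semidiscrete_divergence_constraint_preserved_general
    {Δx Δy : K} (_hΔx : Δx ≠ 0) (_hΔy : Δy ≠ 0)
    {A B : ℤ → ℤ → K} (hcon : ∀ j k, A j k + B j k = 0)
    {RE RW RN RS : (ℤ → K) → ℤ → K}
    (hRE : RE.Odd) (hRW : RW.Odd) (hRN : RN.Odd) (hRS : RS.Odd)
    {uE uW vN vS b1N b1S b2E b2W uyE uyW vxN vxS spx smx spy smy : ℤ → ℤ → K}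
    (_hsx : ∀ j k, smx j k ≠ spx j k) (_hsy : ∀ j k, smy j k ≠ spy j k)
    {F1 F2 G1 G2 : ℤ → ℤ → K}
    (hF1 : ∀ j k, F1 j k = centralUpwindFlux (spx j k) (smx j k)
      (uE j k * RE (A · k) j - b2E j k * uyE j k)
      (uW (j + 1) k * RW (A · k) (j + 1) - b2W (j + 1) k * uyW (j + 1) k)
      (RE (A · k) j) (RW (A · k) (j + 1)))
    (hF2 : ∀ j k, F2 j k = centralUpwindFlux (spx j k) (smx j k)
      (uE j k * RE (B · k) j + b2E j k * uyE j k)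
      (uW (j + 1) k * RW (B · k) (j + 1) + b2W (j + 1) k * uyW (j + 1) k)
      (RE (B · k) j) (RW (B · k) (j + 1)))
    (hG1 : ∀ j k, G1 j k = centralUpwindFlux (spy j k) (smy j k)
      (vN j k * RN (A j) k + b1N j k * vxN j k)
      (vS j (k + 1) * RS (A j) (k + 1) + b1S j (k + 1) * vxS j (k + 1))
      (RN (A j) k) (RS (A j) (k + 1)))
    (hG2 : ∀ j k, G2 j k = centralUpwindFlux (spy j k) (smy j k)
      (vN j k * RN (B j) k - b1N j k * vxN j k)
      (vS j (k + 1) * RS (B j) (k + 1) - b1S j (k + 1) * vxS j (k + 1))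
      (RN (B j) k) (RS (B j) (k + 1)))
    (j k : ℤ) :
    (-(F1 j k - F1 (j - 1) k) / Δx - (G1 j k - G1 j (k - 1)) / Δy) +
      (-(F2 j k - F2 (j - 1) k) / Δx - (G2 j k - G2 j (k - 1)) / Δy) = 0 := by
  have hBx : ∀ k, (B · k) = -(A · k) := fun k =>
    funext fun j => eq_neg_of_add_eq_zero_right (hcon j k)
  have hBy : ∀ j, B j = -A j := fun j =>
    funext fun k => eq_neg_of_add_eq_zero_right (hcon j k)
  have hF : ∀ j k, F2 j k = -F1 j k := fun j k => by
    rw [hF1, hF2, hBx, hRE, hRW, ← centralUpwindFlux_neg]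
    simp only [Pi.neg_apply]
    congr 1 <;> ring
  have hG : ∀ j k, G2 j k = -G1 j k := fun j k => by
    rw [hG1, hG2, hBy, hRN, hRS, ← centralUpwindFlux_neg]
    simp only [Pi.neg_apply]
    congr 1 <;> ring
  rw [hF, hF, hG, hG]
  ring

end CentralUpwind

/-- Semi-discrete preservation of the discrete divergence constraint: for doubly periodic
cell averages with `Āⱼₖ + B̄ⱼₖ = 0`, with minmod-reconstructed interface values of `A`
and `B`, arbitrary interface data for the remaining fields, and arbitrary one-sided
speeds `s⁺ > 0 > s⁻`, the sum of the right-hand sides of the semi-discrete evolution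
equations for `Āⱼₖ` and `B̄ⱼₖ` vanishes, i.e. `d(Āⱼₖ + B̄ⱼₖ)/dt = 0`. -/
theorem semidiscrete_divergence_constraint_preserved
    (Nx Ny : ℕ) (hNx : 1 ≤ Nx) (hNy : 1 ≤ Ny)
    (Δx Δy θ : ℝ) (hΔx : 0 < Δx) (hΔy : 0 < Δy) (hθ : 0 < θ)
    (Ab Bb : ℤ → ℤ → ℝ)
    (hper : ∀ j k : ℤ, Ab (j + Nx) k = Ab j k ∧ Ab j (k + Ny) = Ab j k ∧
      Bb (j + Nx) k = Bb j k ∧ Bb j (k + Ny) = Bb j k)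
    (hcon : ∀ j k : ℤ, Ab j k + Bb j k = 0)
    -- minmod slopes of A and B in the x- and y-directions
    (sAx sAy sBx sBy : ℤ → ℤ → ℝ)
    (hsAx : ∀ j k : ℤ, sAx j k = minmod (θ * (Ab (j + 1) k - Ab j k) / Δx)
      ((Ab (j + 1) k - Ab (j - 1) k) / (2 * Δx)) (θ * (Ab j k - Ab (j - 1) k) / Δx))
    (hsAy : ∀ j k : ℤ, sAy j k = minmod (θ * (Ab j (k + 1) - Ab j k) / Δy)
      ((Ab j (k + 1) - Ab j (k - 1)) / (2 * Δy)) (θ * (Ab j k - Ab j (k - 1)) / Δy))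
    (hsBx : ∀ j k : ℤ, sBx j k = minmod (θ * (Bb (j + 1) k - Bb j k) / Δx)
      ((Bb (j + 1) k - Bb (j - 1) k) / (2 * Δx)) (θ * (Bb j k - Bb (j - 1) k) / Δx))
    (hsBy : ∀ j k : ℤ, sBy j k = minmod (θ * (Bb j (k + 1) - Bb j k) / Δy)
      ((Bb j (k + 1) - Bb j (k - 1)) / (2 * Δy)) (θ * (Bb j k - Bb j (k - 1)) / Δy))
    -- one-sided interface values of A and B
    (AE AW AN AS BE BW BN BS : ℤ → ℤ → ℝ)
    (hAE : ∀ j k : ℤ, AE j k = Ab j k + Δx / 2 * sAx j k)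
    (hAW : ∀ j k : ℤ, AW j k = Ab j k - Δx / 2 * sAx j k)
    (hAN : ∀ j k : ℤ, AN j k = Ab j k + Δy / 2 * sAy j k)
    (hAS : ∀ j k : ℤ, AS j k = Ab j k - Δy / 2 * sAy j k)
    (hBE : ∀ j k : ℤ, BE j k = Bb j k + Δx / 2 * sBx j k)
    (hBW : ∀ j k : ℤ, BW j k = Bb j k - Δx / 2 * sBx j k)
    (hBN : ∀ j k : ℤ, BN j k = Bb j k + Δy / 2 * sBy j k)
    (hBS : ∀ j k : ℤ, BS j k = Bb j k - Δy / 2 * sBy j k)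
    -- arbitrary interface data for the remaining fields
    (uE uW uN uS vE vW vN vS b1N b1S b2E b2W uyE uyW vxN vxS : ℤ → ℤ → ℝ)
    -- one-sided local speeds of propagation
    (spx smx spy smy : ℤ → ℤ → ℝ)
    (hsx : ∀ j k : ℤ, smx j k < 0 ∧ 0 < spx j k)
    (hsy : ∀ j k : ℤ, smy j k < 0 ∧ 0 < spy j k)
    -- central-upwind numerical fluxes; `F· j k` is the flux at interface (j+1/2, k)
    -- and `G· j k` is the flux at interface (j, k+1/2)
    (F1 F2 G1 G2 : ℤ → ℤ → ℝ)
    (hF1 : ∀ j k : ℤ, F1 j k =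
      (spx j k * (uE j k * AE j k - b2E j k * uyE j k) -
        smx j k * (uW (j + 1) k * AW (j + 1) k - b2W (j + 1) k * uyW (j + 1) k)) /
        (spx j k - smx j k) +
      spx j k * smx j k / (spx j k - smx j k) * (AW (j + 1) k - AE j k))
    (hF2 : ∀ j k : ℤ, F2 j k =
      (spx j k * (uE j k * BE j k + b2E j k * uyE j k) -
        smx j k * (uW (j + 1) k * BW (j + 1) k + b2W (j + 1) k * uyW (j + 1) k)) /
        (spx j k - smx j k) +
      spx j k * smx j k / (spx j k - smx j k) * (BW (j + 1) k - BE j k))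
    (hG1 : ∀ j k : ℤ, G1 j k =
      (spy j k * (vN j k * AN j k + b1N j k * vxN j k) -
        smy j k * (vS j (k + 1) * AS j (k + 1) + b1S j (k + 1) * vxS j (k + 1))) /
        (spy j k - smy j k) +
      spy j k * smy j k / (spy j k - smy j k) * (AS j (k + 1) - AN j k))
    (hG2 : ∀ j k : ℤ, G2 j k =
      (spy j k * (vN j k * BN j k - b1N j k * vxN j k) -
        smy j k * (vS j (k + 1) * BS j (k + 1) - b1S j (k + 1) * vxS j (k + 1))) /
        (spy j k - smy j k) +
      spy j k * smy j k / (spy j k - smy j k) * (BS j (k + 1) - BN j k)) :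
    ∀ j k : ℤ,
      (-(F1 j k - F1 (j - 1) k) / Δx - (G1 j k - G1 j (k - 1)) / Δy) +
        (-(F2 j k - F2 (j - 1) k) / Δx - (G2 j k - G2 j (k - 1)) / Δy) = 0 := by
  simp only [hAE, hAW, hAN, hAS, hBE, hBW, hBN, hBS, hsAx, hsAy, hsBx, hsBy] at hF1 hF2 hG1 hG2
  exact semidiscrete_divergence_constraint_preserved_general hΔx.ne' hΔy.ne' hcon
    (odd_minmodUpperValue θ Δx) (odd_minmodLowerValue θ Δx)
    (odd_minmodUpperValue θ Δy) (odd_minmodLowerValue θ Δy)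
    (fun j k => ((hsx j k).1.trans (hsx j k).2).ne)
    (fun j k => ((hsy j k).1.trans (hsy j k).2).ne) hF1 hF2 hG1 hG2
end

section
/- Derivation of the augmented evolution equations for the magnetic-field derivatives in 2-D: let u, v, b1, b2 : ℝ × ℝ² → ℝ be twice continuously differentiable functions of (t, x, y) satisfying the 2-D induction equations (b1)ₜ + ∂_y(v b1 − u b2) = 0 and (b2)ₜ + ∂ₓ(u b2 − v b1) = 0, together with the divergence-free constraint ∂ₓ b1 + ∂_y b2 = 0 at every point. Then the functions A := ∂ₓ b1 and B := ∂_y b2 satisfy Aₜ + ∂ₓ(uA − b2 ∂_y u) + ∂_y(vA + b1 ∂ₓ v) = 0 and Bₜ + ∂ₓ(uB + b2 ∂_y u) + ∂_y(vB − b1 ∂ₓ v) = 0 at every point. -/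
/-- Partial derivative in `t` of a scalar function of `(t, x, y)`. -/
noncomputable def dT2 (f : ℝ × ℝ × ℝ → ℝ) (p : ℝ × ℝ × ℝ) : ℝ :=
  fderiv ℝ f p (1, 0, 0)

/-- Partial derivative in `x` of a scalar function of `(t, x, y)`. -/
noncomputable def dX2 (f : ℝ × ℝ × ℝ → ℝ) (p : ℝ × ℝ × ℝ) : ℝ :=
  fderiv ℝ f p (0, 1, 0)

/-- Partial derivative in `y` of a scalar function of `(t, x, y)`. -/
noncomputable def dY2 (f : ℝ × ℝ × ℝ → ℝ) (p : ℝ × ℝ × ℝ) : ℝ :=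
  fderiv ℝ f p (0, 0, 1)

/-!
Near any point, the product rule gives `v A + b1 vₓ = (v b1)ₓ`, and together with `A = -(b2)_y` it
gives `u A - b2 u_y = -(u b2)_y`. The two fluxes in the equation for `A` therefore contribute
`(v b1)_{xy} - (u b2)_{xy}`, so that equation is the `x`-derivative of the induction equation
for `b1`, with the order of differentiation exchanged. Swapping `(x, u, b1)` with `(y, v, b2)`
preserves the constraint, exchanges the two induction equations, and turns the equation for `A`
into the one for `B`.
-/

open Filter Topology

/-- The directional derivative `∂_w f` as a function of the base point, so that it can be iterated;
it is `0` where `f` is not differentiable, as for `fderiv`. -/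
noncomputable def dirDeriv (𝕜 : Type*) {E F : Type*} [NontriviallyNormedField 𝕜]
    [NormedAddCommGroup E] [NormedSpace 𝕜 E] [NormedAddCommGroup F] [NormedSpace 𝕜 F]
    (w : E) (f : E → F) (p : E) : F :=
  fderiv 𝕜 f p w

section Calculus

variable {𝕜 E F 𝔸 : Type*} [NontriviallyNormedField 𝕜] [NormedAddCommGroup E] [NormedSpace 𝕜 E]
  [NormedAddCommGroup F] [NormedSpace 𝕜 F] [NormedCommRing 𝔸] [NormedAlgebra 𝕜 𝔸] {p : E}

lemma dirDeriv_congr (w : E) {f g : E → F} (h : f =ᶠ[𝓝 p] g) :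
    dirDeriv 𝕜 w f p = dirDeriv 𝕜 w g p :=
  DFunLike.congr_fun h.fderiv_eq w

lemma dirDeriv_neg (w : E) (f : E → F) :
    dirDeriv 𝕜 w (fun q ↦ -f q) p = -dirDeriv 𝕜 w f p :=
  DFunLike.congr_fun fderiv_fun_neg w

lemma dirDeriv_sub (w : E) {f g : E → F} (hf : DifferentiableAt 𝕜 f p)
    (hg : DifferentiableAt 𝕜 g p) :
    dirDeriv 𝕜 w (fun q ↦ f q - g q) p = dirDeriv 𝕜 w f p - dirDeriv 𝕜 w g p :=
  DFunLike.congr_fun (fderiv_fun_sub hf hg) w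

lemma dirDeriv_mul (w : E) {f g : E → 𝔸} (hf : DifferentiableAt 𝕜 f p)
    (hg : DifferentiableAt 𝕜 g p) :
    dirDeriv 𝕜 w (fun q ↦ f q * g q) p = f p * dirDeriv 𝕜 w g p + g p * dirDeriv 𝕜 w f p :=
  DFunLike.congr_fun (fderiv_fun_mul hf hg) w

lemma differentiableAt_dirDeriv (w : E) {f : E → F} (hf : DifferentiableAt 𝕜 (fderiv 𝕜 f) p) :
    DifferentiableAt 𝕜 (dirDeriv 𝕜 w f) p :=
  hf.clm_apply (differentiableAt_const w)

lemma dirDeriv_dirDeriv (w z : E) {f : E → F} (hf : DifferentiableAt 𝕜 (fderiv 𝕜 f) p) :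
    dirDeriv 𝕜 w (dirDeriv 𝕜 z f) p = fderiv 𝕜 (fderiv 𝕜 f) p w z := by
  change fderiv 𝕜 (fun q ↦ fderiv 𝕜 f q z) p w = _
  simp [fderiv_clm_apply hf (differentiableAt_const z)]

lemma differentiableAt_fderiv_of_contDiffAt {n : WithTop ℕ∞} {f : E → F}
    (hf : ContDiffAt 𝕜 n f p) (hn : 2 ≤ n) : DifferentiableAt 𝕜 (fderiv 𝕜 f) p :=
  (hf.fderiv_right (m := 1) (one_add_one_eq_two.trans_le hn)).differentiableAt one_ne_zero

lemma eventually_differentiableAt_of_contDiffAt {n : WithTop ℕ∞} {f : E → F}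
    (hf : ContDiffAt 𝕜 n f p) (hn : n ≠ 0) : ∀ᶠ q in 𝓝 p, DifferentiableAt 𝕜 f q :=
  ((hf.of_le (ENat.one_le_iff_ne_zero_withTop.mpr hn)).eventually (by simp)).mono
    fun _ hq ↦ hq.differentiableAt one_ne_zero

lemma dirDeriv_comm (w z : E) {n : WithTop ℕ∞} {f : E → F} (hf : ContDiffAt 𝕜 n f p)
    (hn : minSmoothness 𝕜 2 ≤ n) :
    dirDeriv 𝕜 w (dirDeriv 𝕜 z f) p = dirDeriv 𝕜 z (dirDeriv 𝕜 w f) p := by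
  have hf' := differentiableAt_fderiv_of_contDiffAt hf (le_minSmoothness.trans hn)
  rw [dirDeriv_dirDeriv w z hf', dirDeriv_dirDeriv z w hf']
  exact hf.isSymmSndFDerivAt hn w z

end Calculus

section Evolution

variable {𝕜 E 𝔸 : Type*} [RCLike 𝕜] [NormedAddCommGroup E] [NormedSpace 𝕜 E]
  [NormedCommRing 𝔸] [NormedAlgebra 𝕜 𝔸] {p : E}

lemma augmented_evolution_equation_of_induction (t x y : E) {u v b₁ b₂ : E → 𝔸}
    (hu : ContDiffAt 𝕜 2 u p) (hv : ContDiffAt 𝕜 2 v p)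
    (hb₁ : ContDiffAt 𝕜 2 b₁ p) (hb₂ : ContDiffAt 𝕜 2 b₂ p)
    (hind : ∀ᶠ q in 𝓝 p,
      dirDeriv 𝕜 t b₁ q + dirDeriv 𝕜 y (fun r ↦ v r * b₁ r - u r * b₂ r) q = 0)
    (hdiv : ∀ᶠ q in 𝓝 p, dirDeriv 𝕜 x b₁ q + dirDeriv 𝕜 y b₂ q = 0) :
    dirDeriv 𝕜 t (dirDeriv 𝕜 x b₁) p +
      dirDeriv 𝕜 x (fun q ↦ u q * dirDeriv 𝕜 x b₁ q - b₂ q * dirDeriv 𝕜 y u q) p +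
      dirDeriv 𝕜 y (fun q ↦ v q * dirDeriv 𝕜 x b₁ q + b₁ q * dirDeriv 𝕜 x v q) p = 0 := by
  set f : E → 𝔸 := fun q ↦ v q * b₁ q
  set g : E → 𝔸 := fun q ↦ u q * b₂ q
  have hf : ContDiffAt 𝕜 2 f p := hv.mul hb₁
  have hg : ContDiffAt 𝕜 2 g p := hu.mul hb₂
  have b₁_t : dirDeriv 𝕜 t b₁ =ᶠ[𝓝 p] fun q ↦ dirDeriv 𝕜 y g q - dirDeriv 𝕜 y f q := by
    filter_upwards [hind, eventually_differentiableAt_of_contDiffAt hf two_ne_zero,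
      eventually_differentiableAt_of_contDiffAt hg two_ne_zero] with q hind_q hf_q hg_q
    rw [dirDeriv_sub y hf_q hg_q] at hind_q
    linear_combination hind_q
  have flux_x : (fun q ↦ u q * dirDeriv 𝕜 x b₁ q - b₂ q * dirDeriv 𝕜 y u q) =ᶠ[𝓝 p]
      fun q ↦ -dirDeriv 𝕜 y g q := by
    filter_upwards [hdiv, eventually_differentiableAt_of_contDiffAt hu two_ne_zero,
      eventually_differentiableAt_of_contDiffAt hb₂ two_ne_zero] with q hdiv_q hu_q hb₂_q
    rw [dirDeriv_mul y hu_q hb₂_q]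
    linear_combination u q * hdiv_q
  have flux_y : (fun q ↦ v q * dirDeriv 𝕜 x b₁ q + b₁ q * dirDeriv 𝕜 x v q) =ᶠ[𝓝 p]
      dirDeriv 𝕜 x f := by
    filter_upwards [eventually_differentiableAt_of_contDiffAt hv two_ne_zero,
      eventually_differentiableAt_of_contDiffAt hb₁ two_ne_zero] with q hv_q hb₁_q
    rw [dirDeriv_mul x hv_q hb₁_q]
  have b₁_tx : dirDeriv 𝕜 t (dirDeriv 𝕜 x b₁) p =
      dirDeriv 𝕜 x (dirDeriv 𝕜 y g) p - dirDeriv 𝕜 x (dirDeriv 𝕜 y f) p := by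
    rw [dirDeriv_comm t x hb₁ (by simp), dirDeriv_congr x b₁_t]
    exact dirDeriv_sub x
      (differentiableAt_dirDeriv y (differentiableAt_fderiv_of_contDiffAt hg le_rfl))
      (differentiableAt_dirDeriv y (differentiableAt_fderiv_of_contDiffAt hf le_rfl))
  rw [b₁_tx, dirDeriv_congr x flux_x, dirDeriv_congr y flux_y, dirDeriv_neg,
    dirDeriv_comm y x hf (by simp)]
  ring

theorem augmented_evolution_equations_2d_general (t x y : E) {u v b₁ b₂ A B : E → 𝔸}
    (hu : ContDiffAt 𝕜 2 u p) (hv : ContDiffAt 𝕜 2 v p)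
    (hb₁ : ContDiffAt 𝕜 2 b₁ p) (hb₂ : ContDiffAt 𝕜 2 b₂ p)
    (hind₁ : ∀ᶠ q in 𝓝 p,
      dirDeriv 𝕜 t b₁ q + dirDeriv 𝕜 y (fun r ↦ v r * b₁ r - u r * b₂ r) q = 0)
    (hind₂ : ∀ᶠ q in 𝓝 p,
      dirDeriv 𝕜 t b₂ q + dirDeriv 𝕜 x (fun r ↦ u r * b₂ r - v r * b₁ r) q = 0)
    (hdiv : ∀ᶠ q in 𝓝 p, dirDeriv 𝕜 x b₁ q + dirDeriv 𝕜 y b₂ q = 0)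
    (hA : ∀ q, A q = dirDeriv 𝕜 x b₁ q) (hB : ∀ q, B q = dirDeriv 𝕜 y b₂ q) :
    dirDeriv 𝕜 t A p + dirDeriv 𝕜 x (fun q ↦ u q * A q - b₂ q * dirDeriv 𝕜 y u q) p +
        dirDeriv 𝕜 y (fun q ↦ v q * A q + b₁ q * dirDeriv 𝕜 x v q) p = 0 ∧
      dirDeriv 𝕜 t B p + dirDeriv 𝕜 x (fun q ↦ u q * B q + b₂ q * dirDeriv 𝕜 y u q) p +
        dirDeriv 𝕜 y (fun q ↦ v q * B q - b₁ q * dirDeriv 𝕜 x v q) p = 0 := by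
  obtain rfl : A = dirDeriv 𝕜 x b₁ := funext hA
  obtain rfl : B = dirDeriv 𝕜 y b₂ := funext hB
  refine ⟨augmented_evolution_equation_of_induction t x y hu hv hb₁ hb₂ hind₁ hdiv, ?_⟩
  have hdiv' : ∀ᶠ q in 𝓝 p, dirDeriv 𝕜 y b₂ q + dirDeriv 𝕜 x b₁ q = 0 := by
    simpa only [add_comm] using hdiv
  rw [add_right_comm]
  exact augmented_evolution_equation_of_induction t y x hv hu hb₂ hb₁ hind₂ hdiv'

end Evolution

/-- Derivation of the augmented evolution equations for the magnetic-field derivatives in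
2-D: if `u, v, b1, b2` are twice continuously differentiable, satisfy the 2-D induction
equations `(b1)ₜ + (v b1 − u b2)_y = 0` and `(b2)ₜ + (u b2 − v b1)ₓ = 0`, and the
divergence-free constraint `(b1)ₓ + (b2)_y = 0`, then `A = (b1)ₓ` and `B = (b2)_y`
satisfy `Aₜ + (uA − b2 u_y)ₓ + (vA + b1 vₓ)_y = 0` and
`Bₜ + (uB + b2 u_y)ₓ + (vB − b1 vₓ)_y = 0`. -/
theorem augmented_evolution_equations_2d
    (u v b1 b2 : ℝ × ℝ × ℝ → ℝ)
    (hu : ContDiff ℝ 2 u) (hv : ContDiff ℝ 2 v)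
    (hb1 : ContDiff ℝ 2 b1) (hb2 : ContDiff ℝ 2 b2)
    (hind1 : ∀ p, dT2 b1 p + dY2 (fun q => v q * b1 q - u q * b2 q) p = 0)
    (hind2 : ∀ p, dT2 b2 p + dX2 (fun q => u q * b2 q - v q * b1 q) p = 0)
    (hdiv : ∀ p, dX2 b1 p + dY2 b2 p = 0)
    (A B : ℝ × ℝ × ℝ → ℝ)
    (hA : ∀ p, A p = dX2 b1 p) (hB : ∀ p, B p = dY2 b2 p) :
    (∀ p, dT2 A p + dX2 (fun q => u q * A q - b2 q * dY2 u q) p +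
      dY2 (fun q => v q * A q + b1 q * dX2 v q) p = 0) ∧
    (∀ p, dT2 B p + dX2 (fun q => u q * B q + b2 q * dY2 u q) p +
      dY2 (fun q => v q * B q - b1 q * dX2 v q) p = 0) := by
  exact forall_and.mp fun p ↦ augmented_evolution_equations_2d_general (1, 0, 0) (0, 1, 0) (0, 0, 1)
    hu.contDiffAt hv.contDiffAt hb1.contDiffAt hb2.contDiffAt
    (.of_forall hind1) (.of_forall hind2) (.of_forall hdiv) hA hB
end
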